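/- For any two vectors x, y in F_q^n, q times the symplectic weight of the concatenated vector (x | y) equals the Hamming weight of x plus the Hamming weight of y plus the sum over all nonzero scalars α in F_q of the Hamming weight of x + αy. Here the symplectic weight of (x | y) is the number of indices i in [0, n-1] such that (x_i, y_i) ≠ (0, 0). -/

import Mathlib

open Finset

/-!
Count the pairs `(α, i)` with `x i + α * y i ≠ 0`, where `α` ranges over the whole field. If
`y i ≠ 0`, the affine map `α ↦ x i + α * y i` is a bijection, so the index `i` contributes `q - 1`;
the missing unit is supplied by `hammingNorm y`. If `y i = 0`, the index contributes `q` or `0`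
according to whether `x i ≠ 0`. The scalar `α = 0` accounts for the term `hammingNorm x`.
-/

/-- The symplectic weight `w_s(x | y)`. The concatenated vector `(x | y)` is encoded by its two
halves, and `(x i, y i) ≠ (0, 0)` by the disjunction `x i ≠ 0 ∨ y i ≠ 0`. -/
def symplecticWeight {A ι : Type*} [Zero A] [DecidableEq A] [Fintype ι] (x y : ι → A) : ℕ :=
  #{i | x i ≠ 0 ∨ y i ≠ 0}

theorem sum_hammingNorm_eq_sum_card {A ι : Type*} {β : ι → Type*} [Fintype ι]
    [∀ i, Zero (β i)] [∀ i, DecidableEq (β i)] (s : Finset A) (f : A → ∀ i, β i) :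
    ∑ a ∈ s, hammingNorm (f a) = ∑ i, #{a ∈ s | f a i ≠ 0} :=
  sum_card_bipartiteAbove_eq_sum_card_bipartiteBelow fun a i ↦ f a i ≠ 0

section DivisionRing

variable {K ι : Type*} [DivisionRing K] [Fintype K] [DecidableEq K] [Fintype ι]

theorem card_add_mul_ne_zero_add_one (a : K) {b : K} (hb : b ≠ 0) :
    #{α : K | a + α * b ≠ 0} + 1 = Fintype.card K := by
  let affine : K ≃ K := (Equiv.mulRight₀ b hb).trans (Equiv.addLeft a)
  have card_eq : #{α : K | a + α * b ≠ 0} = #{c : K | c ≠ 0} :=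
    card_equiv affine fun α ↦ by simp [affine]
  rw [card_eq, filter_ne', card_erase_add_one (mem_univ 0), card_univ]

theorem card_add_mul_ne_zero_add_ite (a b : K) :
    #{α : K | a + α * b ≠ 0} + (if b ≠ 0 then 1 else 0) =
      Fintype.card K * if a ≠ 0 ∨ b ≠ 0 then 1 else 0 := by
  by_cases hb : b = 0
  · by_cases ha : a = 0 <;> simp [ha, hb]
  · simpa [hb] using card_add_mul_ne_zero_add_one a hb

theorem sum_hammingNorm_add_smul_add_hammingNorm (x y : ι → K) :
    ∑ α : K, hammingNorm (x + α • y) + hammingNorm y =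
      Fintype.card K * symplecticWeight x y :=
  calc ∑ α : K, hammingNorm (x + α • y) + hammingNorm y
    _ = ∑ i, (#{α : K | x i + α * y i ≠ 0} + if y i ≠ 0 then 1 else 0) := by
      rw [sum_hammingNorm_eq_sum_card, sum_add_distrib, ← card_filter]
      rfl
    _ = ∑ i, Fintype.card K * (if x i ≠ 0 ∨ y i ≠ 0 then 1 else 0) := by
      simp only [card_add_mul_ne_zero_add_ite]
    _ = Fintype.card K * symplecticWeight x y := by
      rw [← mul_sum, ← card_filter, symplecticWeight]

theorem symplectic_hamming_identity_general (x y : ι → K) :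
    Fintype.card K * symplecticWeight x y =
      hammingNorm x + hammingNorm y + ∑ α : K with α ≠ 0, hammingNorm (x + α • y) := by
  have split_zero : hammingNorm x + ∑ α : K with α ≠ 0, hammingNorm (x + α • y) =
      ∑ α : K, hammingNorm (x + α • y) := by
    simpa [filter_ne'] using
      add_sum_erase univ (fun α : K ↦ hammingNorm (x + α • y)) (mem_univ 0)
  rw [add_right_comm, split_zero, sum_hammingNorm_add_smul_add_hammingNorm]

end DivisionRing

/-- Lemma 1 (symplectic/Hamming weight identity): for x, y in F_q^n,
q · w_s(x|y) = w_H(x) + w_H(y) + ∑_{α ∈ F_q^*} w_H(x + α y). -/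
theorem symplectic_hamming_identity {F : Type*} [Field F] [Fintype F] [DecidableEq F]
    {n : ℕ} (x y : Fin n → F) :
    Fintype.card F * (univ.filter fun i : Fin n => x i ≠ 0 ∨ y i ≠ 0).card
      = hammingNorm x + hammingNorm y +
        ∑ α ∈ univ.filter (fun α : F => α ≠ 0), hammingNorm (x + α • y) :=
  symplectic_hamming_identity_general x y
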